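/- arXiv:math/0509362 — 2 statements merged into one kernel-verified Lean document; each statement's English description precedes it below -/
import Mathlib

section
/- Let (W, S) be an arbitrary Coxeter system and let w ∈ W_c satisfy |𝓛(w)| = n(w) (respectively |𝓡(w)| = n(w)). Then if w is left (respectively right) star reducible to x, we have |𝓛(w)| = |𝓛(x)| and 𝓡(w) = 𝓡(x) (respectively |𝓡(w)| = |𝓡(x)| and 𝓛(w) = 𝓛(x)). -/
open CoxeterSystem

variable {B W : Type*} [Group W] {M : CoxeterMatrix B} (cs : CoxeterSystem M W)

/-- `m(s,t) ≥ 3`: `s` and `t` are distinct noncommuting generators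
(`M s t = 0` encodes `m(s,t) = ∞`). -/
def Noncomm (M : CoxeterMatrix B) (s t : B) : Prop := M s t = 0 ∨ 3 ≤ M s t

/-- The longest element `w_{st}` of the rank-2 parabolic subgroup `⟨s,t⟩`
(meaningful when `3 ≤ M s t < ∞`). -/
def longest (s t : B) : W := cs.wordProd (alternatingWord s t (M s t))

/-- `w` is complex: it admits a reduced factorization `x₁ · w_{st} · x₂` where `w_{st}`
is the longest element of a rank-2 parabolic subgroup `⟨s,t⟩` with `3 ≤ m(s,t) < ∞`. -/
def IsComplex (w : W) : Prop :=
  ∃ s t : B, 3 ≤ M s t ∧ ∃ x₁ x₂ : W,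
    w = x₁ * longest cs s t * x₂ ∧
    cs.length w = cs.length x₁ + cs.length (longest cs s t : W) + cs.length x₂

/-- `w` is fully commutative, i.e. `w ∈ W_c`. -/
def FullyComm (w : W) : Prop := ¬ IsComplex cs w

/-- `x` is weakly complex: `x` is complex and `x = s·u` reduced with `u` fully commutative. -/
def IsWeaklyComplex (x : W) : Prop :=
  IsComplex cs x ∧ ∃ (s : B) (u : W), FullyComm cs u ∧ x = cs.simple s * u ∧
    cs.length x = 1 + cs.length u

/-- The alternating product `t s t s ⋯` with `k` factors, beginning with `t`. -/
def altProd (t s : B) (k : ℕ) : W :=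
  cs.wordProd ((List.range k).map (fun i => if i % 2 = 0 then t else s))

/-- The left descent set `𝓛(w)`. -/
def leftDescents (w : W) : Set B := {i | cs.IsLeftDescent w i}

/-- The right descent set `𝓡(w)`. -/
def rightDescents (w : W) : Set B := {i | cs.IsRightDescent w i}

/-- `w` is a reduced product of distinct pairwise commuting generators. -/
def IsCommProd (w : W) : Prop :=
  ∃ l : List B, l.Nodup ∧ (∀ u ∈ l, ∀ u' ∈ l, u ≠ u' → M u u' = 2) ∧
    cs.IsReduced l ∧ w = cs.wordProd l

/-- `y` is left star reducible to `x` with respect to the pair `{s,t}`: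
`x` and `y` lie in the same left `{s,t}`-string and `ℓ(x) = ℓ(y) − 1`. -/
def LeftStarReducible (s t : B) (y x : W) : Prop :=
  Noncomm M s t ∧
  ((cs.IsLeftDescent y s ∧ ¬ cs.IsLeftDescent y t ∧ x = cs.simple s * y ∧
      cs.IsLeftDescent x t) ∨
   (cs.IsLeftDescent y t ∧ ¬ cs.IsLeftDescent y s ∧ x = cs.simple t * y ∧
      cs.IsLeftDescent x s))

/-- `y` is right star reducible to `x` with respect to the pair `{s,t}`. -/
def RightStarReducible (s t : B) (y x : W) : Prop :=
  Noncomm M s t ∧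
  ((cs.IsRightDescent y s ∧ ¬ cs.IsRightDescent y t ∧ x = y * cs.simple s ∧
      cs.IsRightDescent x t) ∨
   (cs.IsRightDescent y t ∧ ¬ cs.IsRightDescent y s ∧ x = y * cs.simple t ∧
      cs.IsRightDescent x s))

/-- `y` is star reducible to `x`: there is a (possibly empty) chain of left and right
star reductions from `y` to `x`. -/
def StarReducible (y x : W) : Prop :=
  Relation.ReflTransGen
    (fun a b => ∃ s t : B, LeftStarReducible cs s t a b ∨ RightStarReducible cs s t a b) y x

/-- Property F: every fully commutative element is star reducible to a reduced product of
distinct pairwise commuting generators. -/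
def PropertyF : Prop := ∀ w : W, FullyComm cs w → ∃ x : W, StarReducible cs w x ∧ IsCommProd cs x

/-- `n(w)`: the maximum `k` such that `w` admits a reduced factorization `w = w₁·w₂·w₃`
with `w₂` a reduced product of `k` distinct pairwise commuting generators. -/
noncomputable def nval (w : W) : ℕ :=
  sSup {k | ∃ w₁ w₂ w₃ : W, w = w₁ * w₂ * w₃ ∧
    cs.length w = cs.length w₁ + cs.length w₂ + cs.length w₃ ∧
    IsCommProd cs w₂ ∧ cs.length w₂ = k}

/-- The Bruhat order: `x ≤ w` iff some reduced word for `w` has a subword that is a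
reduced word for `x`. -/
def BruhatLE (x w : W) : Prop :=
  ∃ l l' : List B, cs.IsReduced l ∧ cs.wordProd l = w ∧
    l'.Sublist l ∧ cs.IsReduced l' ∧ cs.wordProd l' = x

/-- `w = wI · wII` is the coset decomposition of `w` with respect to `I = {s,t}`:
`wI ∈ W_I`, `𝓛(wII) ∩ I = ∅` and `ℓ(w) = ℓ(wI) + ℓ(wII)`. -/
def CosetDecompL (s t : B) (w wI wII : W) : Prop :=
  w = wI * wII ∧ wI ∈ Subgroup.closure {cs.simple s, cs.simple t} ∧
  ¬ cs.IsLeftDescent wII s ∧ ¬ cs.IsLeftDescent wII t ∧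
  cs.length w = cs.length wI + cs.length wII

/-- `w = wII · wI` is the right coset decomposition of `w` with respect to `I = {s,t}`:
`wI ∈ W_I`, `𝓡(wII) ∩ I = ∅` and `ℓ(w) = ℓ(wII) + ℓ(wI)`. -/
def CosetDecompR (s t : B) (w wII wI : W) : Prop :=
  w = wII * wI ∧ wI ∈ Subgroup.closure {cs.simple s, cs.simple t} ∧
  ¬ cs.IsRightDescent wII s ∧ ¬ cs.IsRightDescent wII t ∧
  cs.length w = cs.length wII + cs.length wI

/-- `k_ε(J) = (−1)^{|J ∩ ε⁻¹(0)|}` for a set `J` of generators. -/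
noncomputable def kSet (ε : B → Bool) (J : Set B) : ℤ :=
  (-1) ^ (J ∩ {i | ε i = false}).ncard

/-- `k_ε(w) = k_ε(𝓛(w)) · k_ε(𝓡(w))`. -/
noncomputable def kElt (ε : B → Bool) (w : W) : ℤ :=
  kSet ε (leftDescents cs w) * kSet ε (rightDescents cs w)

section GeometricRepresentation

open Polynomial.Chebyshev Module

/-- The coroot functional of the geometric representation: `αⱼ ↦ -2 cos (π / m(i,j))`. The
convention `π / 0 = 0` gives the value `-2` when `m(i,j) = ∞`. -/
noncomputable def geomCoroot (M : CoxeterMatrix B) (i : B) : Dual ℝ (B →₀ ℝ) :=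
  Finsupp.linearCombination ℝ fun j => -2 * Real.cos (Real.pi / M i j)

theorem geomCoroot_single (i j : B) :
    geomCoroot M i (Finsupp.single j 1) = -2 * Real.cos (Real.pi / M i j) := by
  simp [geomCoroot]

theorem geomCoroot_single_self (i : B) : geomCoroot M i (Finsupp.single i 1) = 2 := by
  simp [geomCoroot_single]

/-- The reflection in the simple root `αᵢ`. -/
noncomputable def geomReflection (M : CoxeterMatrix B) (i : B) :
    (B →₀ ℝ) ≃ₗ[ℝ] (B →₀ ℝ) :=
  reflection (geomCoroot_single_self (M := M) i)

theorem geomCoroot_mul_sub_two (i j : B) :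
    2 * Real.cos (2 * Real.pi / M i j) = geomCoroot M i (Finsupp.single j 1) *
      geomCoroot M j (Finsupp.single i 1) - 2 := by
  rw [geomCoroot_single, geomCoroot_single, M.symmetric j i, mul_div_assoc, Real.cos_two_mul]
  ring

theorem sin_two_pi_div_ne_zero {m : ℕ} (hm : 3 ≤ m) : Real.sin (2 * Real.pi / m) ≠ 0 := by
  have hm' : (3 : ℝ) ≤ m := by exact_mod_cast hm
  refine (Real.sin_pos_of_pos_of_lt_pi (by positivity) ?_).ne'
  rw [div_lt_iff₀ (by linarith)]
  nlinarith [Real.pi_pos]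

theorem geomReflection_isLiftable (M : CoxeterMatrix B) : M.IsLiftable (geomReflection M) := by
  intro i j
  obtain h0 | h1 | h2 | h3 : M i j = 0 ∨ M i j = 1 ∨ M i j = 2 ∨ 3 ≤ M i j := by lia
  · simp [h0]
  · obtain rfl : i = j := by
      by_contra hne
      exact M.off_diagonal i j hne h1
    rw [h1, pow_one]
    ext1 z
    exact involutive_reflection (geomCoroot_single_self (M := M) i) z
  · ext1 z
    have hij : geomCoroot M i (Finsupp.single j 1) = 0 := by simp [geomCoroot_single, h2]
    have hji : geomCoroot M j (Finsupp.single i 1) = 0 := by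
      simp [geomCoroot_single, M.symmetric j i, h2]
    rw [h2, pow_two]
    simp only [geomReflection, LinearEquiv.mul_apply, reflection_apply, map_sub, map_smul, hij,
      hji, geomCoroot_single_self, LinearEquiv.coe_one, id]
    module
  · ext1 z
    have hs := sin_two_pi_div_ne_zero h3
    have hm0 : (M i j : ℝ) ≠ 0 := by
      have : M i j ≠ 0 := by lia
      exact_mod_cast this
    have hS (n : ℤ) := S_two_mul_real_cos (2 * Real.pi / M i j) n
    rw [geomReflection, geomReflection,
      reflection_mul_reflection_pow_apply _ _ _ _ _ (geomCoroot_mul_sub_two i j)]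
    obtain ⟨k, hk⟩ | ⟨k, hk⟩ := Nat.even_or_odd (M i j)
    · have hz : (S ℝ ((k : ℤ) - 1)).eval (2 * Real.cos (2 * Real.pi / M i j)) = 0 := by
        apply (mul_eq_zero.mp _).resolve_right hs
        rw [hS]
        have : (((k : ℤ) - 1 : ℤ) + 1 : ℝ) * (2 * Real.pi / M i j) = Real.pi := by
          rw [mul_div_assoc', div_eq_iff hm0, hk]
          push_cast
          ring
        rw [this, Real.sin_pi]
      have e1 : ((M i j : ℤ) - 2) / 2 = k - 1 := by lia
      have e2 : ((M i j : ℤ) - 1) / 2 = k - 1 := by lia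
      rw [e1, e2, hz]
      simp
    · have hz : (S ℝ (k : ℤ)).eval (2 * Real.cos (2 * Real.pi / M i j)) +
          (S ℝ ((k : ℤ) - 1)).eval (2 * Real.cos (2 * Real.pi / M i j)) = 0 := by
        apply (mul_eq_zero.mp _).resolve_right hs
        rw [add_mul, hS, hS]
        have : (((k : ℤ) : ℝ) + 1) * (2 * Real.pi / M i j) =
            2 * Real.pi - (((k : ℤ) - 1 : ℤ) + 1 : ℝ) * (2 * Real.pi / M i j) := by
          rw [hk] at hm0 ⊢
          push_cast at hm0 ⊢
          field_simp
          ring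
        rw [this, Real.sin_two_pi_sub]
        ring
      have e1 : ((M i j : ℤ) - 2) / 2 = k - 1 := by lia
      have e2 : ((M i j : ℤ) - 1) / 2 = k := by lia
      have e3 : ((M i j : ℤ) - 3) / 2 = k - 1 := by lia
      have e4 : (M i j : ℤ) / 2 = k := by lia
      rw [e1, e2, e3, e4, hz]
      simp

theorem simple_injective : Function.Injective cs.simple := by
  intro i j h
  by_contra hne
  have h' := congr_arg (cs.lift ⟨_, geomReflection_isLiftable M⟩) h
  rw [lift_apply_simple, lift_apply_simple] at h'
  have h'' := congr_arg (fun e => e (Finsupp.single i (1 : ℝ)) i) h'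
  simp [geomReflection, reflection_apply, hne] at h''
  norm_num at h''

/-- For `m(i,j) ≥ 3`, the order of `sᵢ sⱼ` is at least `m(i,j)`. -/
theorem simple_mul_simple_pow_ne_one {i j : B} (hij : Noncomm M i j) {n : ℕ} (hn : 0 < n)
    (hnM : M i j = 0 ∨ n < M i j) : (cs.simple i * cs.simple j) ^ n ≠ 1 := by
  intro h
  have hne : i ≠ j := by
    rintro rfl
    rcases hij with h | h <;> simp at h
  have h' := congr_arg (cs.lift ⟨_, geomReflection_isLiftable M⟩) h
  rw [map_pow, map_mul, lift_apply_simple, lift_apply_simple, map_one] at h'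
  have h'' := congr_arg (fun e => e (Finsupp.single i (1 : ℝ))) h'
  simp only [geomReflection, LinearEquiv.coe_one, id] at h''
  rw [reflection_mul_reflection_pow_apply_self _ _ _ _ (geomCoroot_mul_sub_two i j)] at h''
  have hi := DFunLike.congr_fun h'' i
  have hj := DFunLike.congr_fun h'' j
  simp only [Finsupp.add_apply, Finsupp.smul_apply, Finsupp.single_eq_same, ne_eq, hne,
    not_false_eq_true, Finsupp.single_eq_of_ne, Ne.symm hne, smul_eq_mul, mul_one, mul_zero,
    add_zero, zero_add, mul_neg, neg_eq_zero, mul_eq_zero] at hi hj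
  have hg : geomCoroot M j (Finsupp.single i 1) ≠ 0 := by
    rw [geomCoroot_single, M.symmetric j i]
    refine mul_ne_zero (by norm_num) (Real.cos_pos_of_mem_Ioo ⟨?_, ?_⟩).ne'
    · have : 0 ≤ Real.pi / M i j := by positivity
      linarith [Real.pi_pos]
    · rcases hij with h0 | h3
      · simp [h0, Real.pi_pos]
      · have h3' : (3 : ℝ) ≤ M i j := by exact_mod_cast h3
        rw [div_lt_iff₀ (by linarith)]
        nlinarith [Real.pi_pos]
  have hz := hj.resolve_right hg
  rcases hij with h0 | h3
  · simp only [h0, Nat.cast_zero, div_zero, Real.cos_zero, mul_one, S_eval_two] at hz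
    push_cast at hz
    have : (n : ℝ) = 0 := by linarith
    exact hn.ne' (by exact_mod_cast this)
  · have hlt : n < M i j := hnM.resolve_left (by lia)
    have hM0 : (0 : ℝ) < M i j := by
      have : 0 < M i j := by lia
      exact_mod_cast this
    have hS (k : ℤ) := S_two_mul_real_cos (2 * Real.pi / M i j) k
    have hs := sin_two_pi_div_ne_zero h3
    have h1 := hS ((n : ℤ) - 1)
    rw [hz, zero_mul] at h1
    push_cast at h1
    rw [sub_add_cancel, eq_comm, Real.sin_eq_zero_iff] at h1
    obtain ⟨k, hk⟩ := h1
    have hk' : (k : ℝ) * M i j = 2 * n := by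
      field_simp at hk
      linarith
    have hk'' : k * (M i j : ℤ) = 2 * n := by exact_mod_cast hk'
    obtain rfl : k = 1 := by nlinarith
    rw [hz, add_zero] at hi
    have h2 := hS n
    rw [hi, one_mul] at h2
    push_cast at h2
    rw [add_mul, ← hk, one_mul] at h2
    push_cast at h2
    rw [one_mul, add_comm, Real.sin_add_pi] at h2
    exact hs (by linarith)

end GeometricRepresentation

section Exchange

open scoped Classical in
/-- The action of a simple reflection `sᵢ` on `W × ℤ/2`: conjugation on the first coordinate,
with a sign change exactly at `sᵢ`. -/
noncomputable def signedConj (i : B) : Equiv.Perm (W × ZMod 2) :=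
  Function.Involutive.toPerm
    (fun p => (cs.simple i * p.1 * cs.simple i, p.2 + if p.1 = cs.simple i then 1 else 0)) <| by
  rintro ⟨t, ε⟩
  have h : cs.simple i * t * cs.simple i = cs.simple i ↔ t = cs.simple i := by
    constructor
    · intro h
      simpa [mul_assoc] using congr_arg (fun x => cs.simple i * x * cs.simple i) h
    · rintro rfl
      simp
  simp only [h, Prod.mk.injEq]
  constructor
  · simp [mul_assoc]
  · rw [add_assoc, CharTwo.add_self_eq_zero, add_zero]

open scoped Classical in
theorem signedConj_apply (i : B) (t : W) (ε : ZMod 2) :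
    signedConj cs i (t, ε) =
      (cs.simple i * t * cs.simple i, ε + if t = cs.simple i then 1 else 0) := rfl

theorem simple_mul_simple_inv (i j : B) :
    (cs.simple i * cs.simple j)⁻¹ = cs.simple j * cs.simple i := by simp

theorem mul_simple_mul_pow_comm (i j : B) (k : ℕ) :
    cs.simple j * (cs.simple i * cs.simple j) ^ k =
      (cs.simple j * cs.simple i) ^ k * cs.simple j := by
  induction k with
  | zero => simp
  | succ k ih => rw [pow_succ, ← mul_assoc, ih, pow_succ]; simp only [mul_assoc]

open scoped Classical in
theorem signedConj_mul_pow_apply (i j : B) (k : ℕ) (t : W) (ε : ZMod 2) :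
    ((signedConj cs i * signedConj cs j) ^ k) (t, ε) =
      ((cs.simple i * cs.simple j) ^ k * t * (cs.simple j * cs.simple i) ^ k,
        ε + ∑ n ∈ Finset.range (2 * k),
          if t = (cs.simple j * cs.simple i) ^ n * cs.simple j then 1 else 0) := by
  induction k with
  | zero => simp
  | succ k ih =>
    have hinv : ((cs.simple i * cs.simple j) ^ k)⁻¹ = (cs.simple j * cs.simple i) ^ k := by
      rw [← inv_pow, simple_mul_simple_inv]
    have hinv' : ((cs.simple j * cs.simple i) ^ k)⁻¹ = (cs.simple i * cs.simple j) ^ k := by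
      rw [← inv_pow, simple_mul_simple_inv]
    have solve (a b c d : W) : a * b * c = d ↔ b = a⁻¹ * d * c⁻¹ := by
      constructor
      · rintro rfl
        group
      · rintro rfl
        group
    rw [pow_succ', Equiv.Perm.mul_apply, ih, Equiv.Perm.mul_apply, signedConj_apply,
      signedConj_apply, show 2 * (k + 1) = 2 * k + 1 + 1 by ring, Finset.sum_range_succ,
      Finset.sum_range_succ]
    have h1 : (cs.simple i * cs.simple j) ^ k * t * (cs.simple j * cs.simple i) ^ k = cs.simple j ↔
        t = (cs.simple j * cs.simple i) ^ (2 * k) * cs.simple j := by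
      rw [solve, hinv, hinv', mul_assoc, mul_simple_mul_pow_comm, two_mul, pow_add, mul_assoc]
    have h2 : cs.simple j * ((cs.simple i * cs.simple j) ^ k * t *
          (cs.simple j * cs.simple i) ^ k) * cs.simple j = cs.simple i ↔
        t = (cs.simple j * cs.simple i) ^ (2 * k + 1) * cs.simple j := by
      rw [solve, solve, hinv, hinv', inv_simple, mul_assoc, mul_assoc _ (cs.simple j),
        mul_simple_mul_pow_comm, ← mul_assoc (cs.simple j * cs.simple i), ← pow_succ',
        ← mul_assoc, ← pow_add]
      ring_nf
    simp only [h1, h2, Prod.mk.injEq]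
    constructor
    · rw [pow_succ', pow_succ (cs.simple j * cs.simple i)]
      simp only [mul_assoc]
    · ring

theorem signedConj_isLiftable : M.IsLiftable (signedConj cs) := by
  classical
  intro i j
  ext1 ⟨t, ε⟩
  rw [signedConj_mul_pow_apply, cs.simple_mul_simple_pow, cs.simple_mul_simple_pow', two_mul,
    Finset.sum_range_add]
  simp only [pow_add, cs.simple_mul_simple_pow', one_mul, mul_one, Equiv.Perm.coe_one, id]
  rw [CharTwo.add_self_eq_zero, add_zero]

open scoped Classical in
theorem lift_signedConj_wordProd_apply (ω : List B) (t : W) (ε : ZMod 2) :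
    cs.lift ⟨_, signedConj_isLiftable cs⟩ (cs.wordProd ω) (t, ε) =
      (cs.wordProd ω * t * (cs.wordProd ω)⁻¹, ε + ((cs.rightInvSeq ω).count t : ZMod 2)) := by
  induction ω with
  | nil => simp
  | cons i ω ih =>
    rw [wordProd_cons, map_mul, Equiv.Perm.mul_apply, ih, lift_apply_simple, signedConj_apply,
      rightInvSeq, List.count_cons]
    have h : cs.wordProd ω * t * (cs.wordProd ω)⁻¹ = cs.simple i ↔
        (cs.wordProd ω)⁻¹ * cs.simple i * cs.wordProd ω = t := by
      constructor
      · intro h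
        rw [← h]
        group
      · rintro rfl
        group
    simp only [h, beq_iff_eq, Prod.mk.injEq]
    constructor
    · simp [mul_assoc]
    · push_cast
      ring

/-- The exchange condition for right descents. -/
theorem mem_rightInvSeq_of_isRightDescent {ω : List B} {i : B}
    (h : cs.IsRightDescent (cs.wordProd ω) i) : cs.simple i ∈ cs.rightInvSeq ω := by
  classical
  obtain ⟨υ, hυ, hυω⟩ := cs.exists_isReduced (cs.wordProd ω * cs.simple i)
  have hprod : cs.wordProd (υ ++ [i]) = cs.wordProd ω := by
    simp [wordProd_append, ← hυω]
  have hred : cs.IsReduced (υ ++ [i]) := by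
    rw [CoxeterSystem.IsReduced, hprod, List.length_append, ← hυ.eq, ← hυω, List.length_singleton]
    exact ((cs.isRightDescent_iff).mp h).symm
  have hmem : cs.simple i ∈ cs.rightInvSeq (υ ++ [i]) := by
    rw [← List.concat_eq_append, rightInvSeq_concat]
    simp
  have hcount := List.count_eq_one_of_mem hred.nodup_rightInvSeq hmem
  have h1 := lift_signedConj_wordProd_apply cs (υ ++ [i]) (cs.simple i) 0
  rw [hprod, lift_signedConj_wordProd_apply, hcount, Prod.mk.injEq] at h1
  by_contra hnot
  simp [List.count_eq_zero_of_not_mem hnot] at h1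

/-- The exchange condition for left descents. -/
theorem mem_leftInvSeq_of_isLeftDescent {ω : List B} {i : B}
    (h : cs.IsLeftDescent (cs.wordProd ω) i) : cs.simple i ∈ cs.leftInvSeq ω := by
  rw [← cs.isRightDescent_inv_iff, ← cs.wordProd_reverse] at h
  simpa [rightInvSeq_reverse] using mem_rightInvSeq_of_isRightDescent cs h

theorem leftInvSeq_append (α β : List B) :
    cs.leftInvSeq (α ++ β) =
      cs.leftInvSeq α ++ (cs.leftInvSeq β).map (MulAut.conj (cs.wordProd α)) := by
  induction α with
  | nil => simp [leftInvSeq]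
  | cons i α ih => simp [leftInvSeq, ih, wordProd_cons, Function.comp_def, mul_assoc]

/-- If `w` has a reduced factorization starting with the word `α` and `i` is a left descent of
`w`, then either `sᵢ` is an inversion of `α`, or `w` has a reduced factorization starting
with `i :: α`. -/
theorem mem_leftInvSeq_or_exists_cons {w y : W} {α : List B} {i : B}
    (hw : w = cs.wordProd α * y) (hl : cs.length w = α.length + cs.length y)
    (hi : cs.IsLeftDescent w i) :
    cs.simple i ∈ cs.leftInvSeq α ∨ ∃ y', w = cs.wordProd (i :: α) * y' ∧
      cs.length w = (i :: α).length + cs.length y' := by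
  obtain ⟨β, hβ, rfl⟩ := cs.exists_isReduced y
  rw [hw, ← wordProd_append] at hi
  have hmem := mem_leftInvSeq_of_isLeftDescent cs hi
  rw [leftInvSeq_append, List.mem_append] at hmem
  refine hmem.imp_right fun h => ?_
  obtain ⟨t, ht, hti⟩ := List.mem_map.mp h
  have hlt := (cs.isLeftInversion_of_mem_leftInvSeq hβ ht).2
  rw [MulAut.conj_apply] at hti
  have hw' : w = cs.wordProd (i :: α) * (t * cs.wordProd β) := by
    have htt := (cs.isReflection_of_mem_leftInvSeq β ht).mul_self
    rw [hw, wordProd_cons, ← hti]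
    simp [mul_assoc, ← mul_assoc t t, htt]
  refine ⟨_, hw', ?_⟩
  have h1 := cs.length_mul_le (cs.wordProd (i :: α)) (t * cs.wordProd β)
  have h2 := cs.length_wordProd_le (i :: α)
  rw [← hw'] at h1
  rw [List.length_cons] at h2 ⊢
  lia

end Exchange

section Descents

theorem Noncomm.symm {s t : B} (h : Noncomm M s t) : Noncomm M t s := by
  unfold Noncomm at *
  rwa [M.symmetric t s]

theorem exists_eq_pow_mul_of_mem_leftInvSeq_alternatingWord (s t : B) (k : ℕ) {x : W}
    (hx : x ∈ cs.leftInvSeq (alternatingWord s t k)) :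
    ∃ n < k, x = if Even k then (cs.simple s * cs.simple t) ^ n * cs.simple s
      else (cs.simple t * cs.simple s) ^ n * cs.simple t := by
  induction k generalizing x with
  | zero => simp [alternatingWord] at hx
  | succ k ih =>
    rw [alternatingWord_succ', leftInvSeq, List.mem_cons, List.mem_map] at hx
    rcases hx with rfl | ⟨y, hy, rfl⟩
    · refine ⟨0, k.succ_pos, ?_⟩
      by_cases hk : Even k <;> simp [hk, Nat.even_add_one]
    · obtain ⟨n, hn, rfl⟩ := ih hy
      refine ⟨n + 1, by lia, ?_⟩
      by_cases hk : Even k <;>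
        simp only [hk, Nat.even_add_one, not_true, not_false_iff, if_true, if_false,
          MulAut.conj_apply, inv_simple, pow_succ', ← mul_simple_mul_pow_comm, mul_assoc]

theorem exists_eq_alternatingWord_mul {w : W} {s t : B} (hst : Noncomm M s t)
    (hs : cs.IsLeftDescent w s) (ht : cs.IsLeftDescent w t) (k : ℕ)
    (hk : M s t = 0 ∨ k ≤ M s t) :
    ∃ y, w = cs.wordProd (alternatingWord s t k) * y ∧
      cs.length w = (alternatingWord s t k).length + cs.length y := by
  induction k with
  | zero => exact ⟨w, by simp [alternatingWord]⟩
  | succ k ih =>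
    obtain ⟨y, hy, hl⟩ := ih (hk.imp_right fun h => by lia)
    rw [alternatingWord_succ']
    refine (mem_leftInvSeq_or_exists_cons cs hy hl ?_).resolve_left fun hmem => ?_
    · split_ifs
      exacts [ht, hs]
    · obtain ⟨n, hn, hx⟩ := exists_eq_pow_mul_of_mem_leftInvSeq_alternatingWord cs s t k hmem
      have hlt : M s t = 0 ∨ n + 1 < M s t := hk.imp_right fun h => by lia
      split_ifs at hx
      · refine simple_mul_simple_pow_ne_one cs hst n.succ_pos hlt ?_
        rw [pow_succ, ← mul_assoc, ← hx, simple_mul_simple_self]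
      · refine simple_mul_simple_pow_ne_one cs hst.symm n.succ_pos (M.symmetric s t ▸ hlt) ?_
        rw [pow_succ, ← mul_assoc, ← hx, simple_mul_simple_self]

/-- Distinct left descents of a fully commutative element commute. -/
theorem FullyComm.eq_two_of_isLeftDescent {w : W} (hw : FullyComm cs w) {s t : B} (hne : s ≠ t)
    (hs : cs.IsLeftDescent w s) (ht : cs.IsLeftDescent w t) : M s t = 2 := by
  have h1 := M.off_diagonal s t hne
  by_contra h2
  have hst : Noncomm M s t := by
    unfold Noncomm
    lia
  have key := exists_eq_alternatingWord_mul cs hst hs ht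
  rcases hst with h0 | h3
  · obtain ⟨y, -, hy⟩ := key (cs.length w + 1) (Or.inl h0)
    rw [length_alternatingWord] at hy
    lia
  · obtain ⟨y, hy, hl⟩ := key (M s t) (Or.inr le_rfl)
    refine hw ⟨s, t, h3, 1, y, by rw [one_mul]; exact hy, ?_⟩
    have h4 := cs.length_wordProd_le (alternatingWord s t (M s t))
    have h5 := cs.length_mul_le (longest cs s t) y
    rw [longest, ← hy] at h5
    rw [length_one, longest]
    lia

theorem simple_mul_simple_comm {i j : B} (h : M i j = 2) :
    cs.simple i * cs.simple j = cs.simple j * cs.simple i := by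
  have h2 := cs.simple_mul_simple_pow i j
  rw [h, pow_two] at h2
  rw [← simple_mul_simple_inv cs i j]
  exact (inv_eq_of_mul_eq_one_left h2).symm

theorem leftInvSeq_eq_map_simple {l : List B} (hl : l.Nodup)
    (hcomm : ∀ u ∈ l, ∀ u' ∈ l, u ≠ u' → M u u' = 2) :
    cs.leftInvSeq l = l.map cs.simple := by
  induction l with
  | nil => simp
  | cons i l ih =>
    rw [List.nodup_cons] at hl
    rw [leftInvSeq, ih hl.2 fun u hu u' hu' => hcomm u (by simp [hu]) u' (by simp [hu']),
      List.map_cons, List.map_map]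
    congr 1
    refine List.map_congr_left fun j hj => ?_
    have hij : i ≠ j := fun h => hl.1 (h ▸ hj)
    rw [Function.comp_apply, MulAut.conj_apply,
      simple_mul_simple_comm cs (hcomm i (by simp) j (by simp [hj]) hij), mul_inv_cancel_right]

/-- A list of distinct left descents of a fully commutative element can be split off. -/
theorem FullyComm.exists_eq_wordProd_mul {w : W} (hw : FullyComm cs w) {l : List B}
    (hl : l.Nodup) (hd : ∀ u ∈ l, cs.IsLeftDescent w u) :
    ∃ y, w = cs.wordProd l * y ∧ cs.length w = l.length + cs.length y := by
  induction l with
  | nil => exact ⟨w, by simp⟩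
  | cons i l ih =>
    rw [List.nodup_cons] at hl
    have hd' : ∀ u ∈ l, cs.IsLeftDescent w u := fun u hu => hd u (by simp [hu])
    obtain ⟨y, hy, hly⟩ := ih hl.2 hd'
    refine (mem_leftInvSeq_or_exists_cons cs hy hly (hd i (by simp))).resolve_left fun hmem => ?_
    rw [leftInvSeq_eq_map_simple cs hl.2 fun u hu u' hu' hne =>
      hw.eq_two_of_isLeftDescent cs hne (hd' u hu) (hd' u' hu'), List.mem_map] at hmem
    obtain ⟨j, hj, hji⟩ := hmem
    exact hl.1 (simple_injective cs hji ▸ hj)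

theorem FullyComm.leftDescents_finite {w : W} (hw : FullyComm cs w) :
    (leftDescents cs w).Finite := by
  by_contra hinf
  obtain ⟨F, hF, hcard⟩ := Set.Infinite.exists_subset_card_eq hinf (cs.length w + 1)
  obtain ⟨y, -, hy⟩ := hw.exists_eq_wordProd_mul cs F.nodup_toList
    fun u hu => hF (Finset.mem_toList.mp hu)
  rw [Finset.length_toList, hcard] at hy
  lia

theorem FullyComm.of_simple_mul {w x : W} {s : B} (hw : FullyComm cs w)
    (hs : cs.IsLeftDescent w s) (hx : x = cs.simple s * w) : FullyComm cs x := by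
  rintro ⟨a, b, hab, x₁, x₂, hprod, hlen⟩
  have hwx : w = cs.simple s * x₁ * longest cs a b * x₂ := by
    rw [mul_assoc, mul_assoc, ← mul_assoc x₁, ← hprod, hx, simple_mul_simple_cancel_left]
  refine hw ⟨a, b, hab, cs.simple s * x₁, x₂, hwx, ?_⟩
  have h1 := cs.length_mul_le (cs.simple s * x₁ * longest cs a b) x₂
  have h2 := cs.length_mul_le (cs.simple s * x₁) (longest cs a b)
  have h3 := cs.length_mul_le (cs.simple s) x₁
  rw [length_simple] at h3
  rw [isLeftDescent_iff, ← hx] at hs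
  rw [← hwx] at h1
  lia

theorem le_nval {w w₁ w₂ w₃ : W} (hw : w = w₁ * w₂ * w₃)
    (hl : cs.length w = cs.length w₁ + cs.length w₂ + cs.length w₃) (h : IsCommProd cs w₂) :
    cs.length w₂ ≤ nval cs w := by
  refine le_csSup ⟨cs.length w, ?_⟩ ⟨w₁, w₂, w₃, hw, hl, h, rfl⟩
  rintro k ⟨_, _, _, -, hlen, -, rfl⟩
  lia

/-- If `x = s w` with `s` a left descent of the fully commutative element `w`, then the number of
left descents of `x` is at most `n(w)`. -/
theorem FullyComm.ncard_leftDescents_simple_mul_le_nval {w x : W} {s : B} (hw : FullyComm cs w)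
    (hs : cs.IsLeftDescent w s) (hx : x = cs.simple s * w) :
    (leftDescents cs x).ncard ≤ nval cs w := by
  have hxc := hw.of_simple_mul cs hs hx
  have hfin := hxc.leftDescents_finite cs
  set l := hfin.toFinset.toList with hl
  have hmem : ∀ u ∈ l, cs.IsLeftDescent x u := fun u hu => by
    simpa [hl, leftDescents] using hu
  obtain ⟨y, hy, hly⟩ := hxc.exists_eq_wordProd_mul cs (Finset.nodup_toList _) hmem
  have hlen : l.length = (leftDescents cs x).ncard := by
    rw [hl, Finset.length_toList, Set.ncard_eq_toFinset_card _ hfin]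
  have hred : cs.IsReduced l := by
    have h1 := cs.length_wordProd_le l
    have h2 := cs.length_mul_le (cs.wordProd l) y
    rw [← hy] at h2
    rw [CoxeterSystem.IsReduced]
    lia
  rw [← hlen, ← hred.eq]
  refine le_nval cs (w₁ := cs.simple s) (w₃ := y) ?_ ?_
    ⟨l, Finset.nodup_toList _, fun u hu u' hu' hne =>
      hxc.eq_two_of_isLeftDescent cs hne (hmem u hu) (hmem u' hu'), hred, rfl⟩
  · rw [mul_assoc, ← hy, hx, simple_mul_simple_cancel_left]
  · rw [isLeftDescent_iff, ← hx] at hs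
    rw [length_simple, hred.eq]
    lia

theorem FullyComm.ncard_leftDescents_eq {w x : W} {s t : B} (hw : FullyComm cs w)
    (hn : (leftDescents cs w).ncard = nval cs w) (hs : cs.IsLeftDescent w s)
    (ht : ¬ cs.IsLeftDescent w t) (hx : x = cs.simple s * w) (htx : cs.IsLeftDescent x t) :
    (leftDescents cs w).ncard = (leftDescents cs x).ncard := by
  refine le_antisymm ?_ (hn ▸ hw.ncard_leftDescents_simple_mul_le_nval cs hs hx)
  have hfinx := (hw.of_simple_mul cs hs hx).leftDescents_finite cs
  have hfin := hw.leftDescents_finite cs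
  have hsub : insert t (leftDescents cs w \ {s}) ⊆ leftDescents cs x := by
    rintro u (rfl | ⟨hu, hus⟩)
    · exact htx
    · have hsu : s ≠ u := fun h => hus h.symm
      obtain ⟨y, hy, hl⟩ := hw.exists_eq_wordProd_mul cs (l := [s, u]) (by simpa using hsu)
        (by simp only [List.mem_cons, List.not_mem_nil, or_false, forall_eq_or_imp, forall_eq]
            exact ⟨hs, hu⟩)
      rw [wordProd_cons, wordProd_singleton, mul_assoc] at hy
      rw [hy, simple_mul_simple_cancel_left] at hx
      change cs.IsLeftDescent x u
      rw [CoxeterSystem.IsLeftDescent, hx, simple_mul_simple_cancel_left]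
      have h1 := cs.length_mul_le (cs.simple s) (cs.simple u * y)
      rw [← hy, length_simple] at h1
      simp only [List.length_cons, List.length_nil] at hl
      lia
  have h1 := Set.ncard_le_ncard hsub hfinx
  rw [Set.ncard_insert_of_notMem (fun h => ht h.1) hfin.sdiff] at h1
  have h2 := Set.ncard_sdiff_singleton_add_one (show s ∈ leftDescents cs w from hs) hfin
  lia

theorem rightDescents_eq_of_simple_mul {w x : W} {s t : B} (hs : cs.IsLeftDescent w s)
    (ht : ¬ cs.IsLeftDescent w t) (hx : x = cs.simple s * w) (htx : cs.IsLeftDescent x t) :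
    rightDescents cs w = rightDescents cs x := by
  have hsl := hs
  rw [isLeftDescent_iff, ← hx] at hsl
  have hwx : w = cs.simple s * x := by rw [hx, simple_mul_simple_cancel_left]
  ext r
  change cs.IsRightDescent w r ↔ cs.IsRightDescent x r
  constructor
  · intro hr
    by_contra hrx
    obtain ⟨υ, hυ, hwυ⟩ := cs.exists_isReduced (w * cs.simple r)
    have hrl := hr
    rw [isRightDescent_iff] at hrl
    rw [not_isRightDescent_iff] at hrx
    have hw : w = cs.wordProd υ * cs.simple r := by
      rw [← hwυ, simple_mul_simple_cancel_right]
    rcases mem_leftInvSeq_or_exists_cons cs hw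
      (by rw [length_simple, ← hυ.eq, ← hwυ, hrl]) hs with hmem | ⟨y, hy, hl⟩
    · have h1 := (cs.isLeftInversion_of_mem_leftInvSeq hυ hmem).2
      rw [← hwυ, ← mul_assoc, ← hx] at h1
      lia
    · have hy0 : cs.length y = 0 := by
        rw [List.length_cons, ← hυ.eq, ← hwυ] at hl
        lia
      rw [length_eq_zero_iff] at hy0
      rw [hy0, mul_one, wordProd_cons, ← hwυ] at hy
      have hxr : w = x * cs.simple r := by
        have : x = w * cs.simple r := by rw [hx]; nth_rw 1 [hy]; simp
        rw [this, simple_mul_simple_cancel_right]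
      rw [isLeftDescent_iff] at htx
      rw [not_isLeftDescent_iff] at ht
      have h1 := cs.length_mul_le (cs.simple t * x) (cs.simple r)
      rw [mul_assoc, ← hxr, length_simple] at h1
      lia
  · intro hr
    rw [isRightDescent_iff] at hr
    have h1 := cs.length_mul_le (cs.simple s) (x * cs.simple r)
    rw [← mul_assoc, ← hwx, length_simple] at h1
    rw [CoxeterSystem.IsRightDescent]
    lia

theorem FullyComm.leftStarReducible {w x : W} {s t : B} (hw : FullyComm cs w)
    (hn : (leftDescents cs w).ncard = nval cs w) (h : LeftStarReducible cs s t w x) :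
    (leftDescents cs w).ncard = (leftDescents cs x).ncard ∧
      rightDescents cs w = rightDescents cs x := by
  obtain ⟨-, ⟨h1, h2, h3, h4⟩ | ⟨h1, h2, h3, h4⟩⟩ := h <;>
    exact ⟨hw.ncard_leftDescents_eq cs hn h1 h2 h3 h4,
      rightDescents_eq_of_simple_mul cs h1 h2 h3 h4⟩

end Descents

section Inverse

theorem longest_inv (s t : B) : (longest cs s t)⁻¹ = longest cs s t := by
  rw [longest, prod_alternatingWord_eq_mul_pow]
  split_ifs with h
  · have h2 := cs.simple_mul_simple_pow s t
    rw [← Nat.div_two_mul_two_of_even h, pow_mul, pow_two] at h2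
    rw [one_mul]
    exact inv_eq_of_mul_eq_one_left h2
  · rw [mul_inv_rev, ← inv_pow, simple_mul_simple_inv, inv_simple, mul_simple_mul_pow_comm]

theorem IsComplex.inv {w : W} (h : IsComplex cs w) : IsComplex cs w⁻¹ := by
  obtain ⟨s, t, hst, x₁, x₂, rfl, hl⟩ := h
  refine ⟨s, t, hst, x₂⁻¹, x₁⁻¹, ?_, ?_⟩
  · rw [mul_inv_rev, mul_inv_rev, longest_inv, mul_assoc]
  · rw [length_inv, length_inv, length_inv, hl]
    ring

theorem FullyComm.inv {w : W} (h : FullyComm cs w) : FullyComm cs w⁻¹ :=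
  fun hc => h (by simpa using hc.inv)

theorem IsCommProd.inv {w : W} (h : IsCommProd cs w) : IsCommProd cs w⁻¹ := by
  obtain ⟨l, hl, hcomm, hred, rfl⟩ := h
  exact ⟨l.reverse, List.nodup_reverse.mpr hl, by simpa using hcomm, hred.reverse,
    (cs.wordProd_reverse l).symm⟩

theorem nval_inv (w : W) : nval cs w⁻¹ = nval cs w := by
  have key (w : W) (k : ℕ) : (∃ w₁ w₂ w₃ : W, w = w₁ * w₂ * w₃ ∧
      cs.length w = cs.length w₁ + cs.length w₂ + cs.length w₃ ∧
      IsCommProd cs w₂ ∧ cs.length w₂ = k) → ∃ w₁ w₂ w₃ : W, w⁻¹ = w₁ * w₂ * w₃ ∧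
      cs.length w⁻¹ = cs.length w₁ + cs.length w₂ + cs.length w₃ ∧
      IsCommProd cs w₂ ∧ cs.length w₂ = k := by
    rintro ⟨w₁, w₂, w₃, rfl, hl, h, rfl⟩
    refine ⟨w₃⁻¹, w₂⁻¹, w₁⁻¹, by group, ?_, h.inv, cs.length_inv w₂⟩
    simp only [length_inv, hl]
    ring
  unfold nval
  congr 1
  ext k
  exact ⟨fun h => by simpa using key w⁻¹ k h, key w k⟩

theorem leftDescents_inv (w : W) : leftDescents cs w⁻¹ = rightDescents cs w :=
  Set.ext fun _ => cs.isLeftDescent_inv_iff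

theorem rightDescents_inv (w : W) : rightDescents cs w⁻¹ = leftDescents cs w :=
  Set.ext fun _ => cs.isRightDescent_inv_iff

theorem RightStarReducible.inv {w x : W} {s t : B} (h : RightStarReducible cs s t w x) :
    LeftStarReducible cs s t w⁻¹ x⁻¹ := by
  refine ⟨h.1, ?_⟩
  simp only [isLeftDescent_inv_iff]
  exact h.2.imp (fun ⟨h1, h2, h3, h4⟩ => ⟨h1, h2, by simp [h3], h4⟩)
    fun ⟨h1, h2, h3, h4⟩ => ⟨h1, h2, by simp [h3], h4⟩

end Inverse

/-- Lemma 7.4: suppose `w ∈ W_c` satisfies `|𝓛(w)| = n(w)` (respectively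
`|𝓡(w)| = n(w)`).  Then if `w` is left (respectively right) star reducible to `x`, we
have `|𝓛(w)| = |𝓛(x)|` and `𝓡(w) = 𝓡(x)` (respectively `|𝓡(w)| = |𝓡(x)|` and
`𝓛(w) = 𝓛(x)`). -/
theorem statement9 (w : W) (hw : FullyComm cs w) :
    (((leftDescents cs w).ncard = nval cs w) →
      ∀ (x : W) (s t : B), LeftStarReducible cs s t w x →
        (leftDescents cs w).ncard = (leftDescents cs x).ncard ∧
        rightDescents cs w = rightDescents cs x) ∧
    (((rightDescents cs w).ncard = nval cs w) →
      ∀ (x : W) (s t : B), RightStarReducible cs s t w x →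
        (rightDescents cs w).ncard = (rightDescents cs x).ncard ∧
        leftDescents cs w = leftDescents cs x) := by
  refine ⟨fun hn x s t h => hw.leftStarReducible cs hn h, fun hn x s t h => ?_⟩
  have key := (hw.inv cs).leftStarReducible cs (by rw [leftDescents_inv, nval_inv, hn]) h.inv
  simpa only [leftDescents_inv, rightDescents_inv] using key
end

section
/- Let δ = v + v⁻¹ in the ring ℤ[v, v⁻¹] of Laurent polynomials over ℤ. Suppose f ∈ ℤ[v, v⁻¹] is such that δⁿ·f = g(δ) for some integer n ≥ 0 and some polynomial g ∈ ℤ[X] with nonnegative coefficients. Then f = h(δ) for some polynomial h ∈ ℤ[X] with nonnegative coefficients. (Equivalently, as subsets of ℚ(v), ℤ^{≥0}[δ, δ⁻¹] ∩ ℤ[v, v⁻¹] = ℤ^{≥0}[δ].) -/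
open LaurentPolynomial

/-- The element `v + v⁻¹` is nonzero. -/
theorem T_one_add_T_neg_one_ne_zero : (T 1 + T (-1) : LaurentPolynomial ℤ) ≠ 0 := by
  intro h
  have h₁ := congrArg (fun p : LaurentPolynomial ℤ => p.coeff 1) h
  simp at h₁

/-- Specializing `v` to the imaginary unit kills `v + v⁻¹`. -/
theorem eval₂_I_T_one_add_T_neg_one :
    eval₂ (Int.castRingHom ℂ) (Units.mk0 Complex.I Complex.I_ne_zero)
      (T 1 + T (-1) : LaurentPolynomial ℤ) = 0 := by
  simp [map_add, eval₂_T]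

/-- If `v + v⁻¹` divides `g(v + v⁻¹)`, then `g` has zero constant coefficient. -/
theorem coeff_zero_eq_zero_of_mul_eq_aeval {f : LaurentPolynomial ℤ} {g : Polynomial ℤ}
    (hfg : (T 1 + T (-1) : LaurentPolynomial ℤ) * f =
      Polynomial.aeval (T 1 + T (-1) : LaurentPolynomial ℤ) g) :
    g.coeff 0 = 0 := by
  have h := congrArg
    (eval₂ (Int.castRingHom ℂ) (Units.mk0 Complex.I Complex.I_ne_zero)).toIntAlgHom hfg
  rw [← Polynomial.aeval_algHom_apply, map_mul] at h
  simp only [RingHom.toIntAlgHom_apply, eval₂_I_T_one_add_T_neg_one, zero_mul] at h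
  rw [← Polynomial.coeff_zero_eq_aeval_zero'] at h
  simpa using h.symm

/-- Let `δ = v + v⁻¹` in `ℤ[v,v⁻¹]`.  If `f ∈ ℤ[v,v⁻¹]` satisfies `δⁿ·f = g(δ)` for some
`n ≥ 0` and some polynomial `g` with nonnegative coefficients, then `f = h(δ)` for some
polynomial `h` with nonnegative coefficients; i.e.
`ℤ^{≥0}[δ,δ⁻¹] ∩ ℤ[v,v⁻¹] = ℤ^{≥0}[δ]`. -/
theorem statement12 (f : LaurentPolynomial ℤ) (n : ℕ) (g : Polynomial ℤ)
    (hg : ∀ i, 0 ≤ g.coeff i)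
    (hfg : (T 1 + T (-1) : LaurentPolynomial ℤ) ^ n * f =
      Polynomial.aeval (T 1 + T (-1) : LaurentPolynomial ℤ) g) :
    ∃ h : Polynomial ℤ, (∀ i, 0 ≤ h.coeff i) ∧
      f = Polynomial.aeval (T 1 + T (-1) : LaurentPolynomial ℤ) h := by
  induction n generalizing g with
  | zero => exact ⟨g, hg, by simpa using hfg⟩
  | succ n ih =>
    rw [pow_succ', mul_assoc] at hfg
    have h₀ := coeff_zero_eq_zero_of_mul_eq_aeval hfg
    refine ih g.divX (fun i => by simpa using hg (i + 1)) ?_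
    refine mul_left_cancel₀ T_one_add_T_neg_one_ne_zero ?_
    rw [hfg]
    conv_lhs => rw [← Polynomial.X_mul_divX_add g, h₀]
    simp
end
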